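/- Let S be a finitely generated submonoid of ℕ^n, regarded as a subset of ℝ^n, let C := ℝ_{≥0}·S be the convex cone generated by S, and let ℤS denote the subgroup of ℝ^n generated by S. Define T := ⋃_τ ( ℤ(S ∩ τ) ∩ relint(τ) ), where the union ranges over all faces τ of C, ℤ(S ∩ τ) is the subgroup of ℝ^n generated by S ∩ τ, and relint(τ) is the relative (intrinsic) interior of τ. Then: (i) T is a submonoid of ℤS containing S; (ii) T is semisaturated in ℤS; and (iii) every submonoid U of ℤS with S ⊆ U that is semisaturated in ℤS contains T. Hence T is the semisaturation S⁺ of S. -/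

import Mathlib

open Matrix

/-- The Farkas lemma for finite families. -/
theorem farkas_aux {ι V : Type*} [AddCommGroup V] [Module ℝ V] (s : Finset ι) :
    ∀ (v : ι → V) (b : V),
      (∃ c : ι → ℝ, (∀ i, 0 ≤ c i) ∧ b = ∑ i ∈ s, c i • v i) ∨
      ∃ φ : V →ₗ[ℝ] ℝ, (∀ i ∈ s, 0 ≤ φ (v i)) ∧ φ b < 0 := by
  classical
  induction s using Finset.induction_on with
  | empty =>
    intro v b
    by_cases hb : b = 0
    · left; exact ⟨0, by simp, by simp [hb]⟩
    · right
      obtain ⟨φ, hφ⟩ : ∃ φ : Module.Dual ℝ V, φ b ≠ 0 := by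
        by_contra! h
        exact hb ((Module.forall_dual_apply_eq_zero_iff ℝ b).1 h)
      rcases lt_or_gt_of_ne hφ with h | h
      · exact ⟨φ, by simp, h⟩
      · exact ⟨-φ, by simp, by simpa using h⟩
  | insert a s ha ih =>
    intro v b
    rcases ih v b with ⟨c, hc, hb⟩ | ⟨φ, hφ, hφb⟩
    · left
      refine ⟨Function.update c a 0, fun i => ?_, ?_⟩
      · by_cases h : i = a
        · subst h; simp
        · simp [h, hc i]
      · rw [Finset.sum_insert ha, hb]
        simp only [Function.update_self, zero_smul, zero_add]
        refine Finset.sum_congr rfl fun i hi => ?_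
        rw [Function.update_of_ne (by rintro rfl; exact ha hi)]
    · by_cases hφa : 0 ≤ φ (v a)
      · right
        refine ⟨φ, fun i hi => ?_, hφb⟩
        rcases Finset.mem_insert.1 hi with rfl | hi
        · exact hφa
        · exact hφ i hi
      push Not at hφa
      set d : ℝ := (-φ (v a))⁻¹ with hd
      have hdpos : 0 < d := inv_pos.2 (by linarith)
      have hda : d * φ (v a) = -1 := by
        have := hφa.ne
        rw [hd, inv_neg, neg_mul, inv_mul_cancel₀ this]
      let L : V →ₗ[ℝ] V := LinearMap.id + (d • φ).smulRight (v a)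
      have hL : ∀ w, L w = w + (d * φ w) • v a := fun w => by simp [L]
      rcases ih (fun i => L (v i)) (L b) with ⟨c, hc, hb⟩ | ⟨ψ, hψ, hψb⟩
      · left
        refine ⟨Function.update c a (∑ i ∈ s, c i * (d * φ (v i)) - d * φ b), fun i => ?_, ?_⟩
        · by_cases h : i = a
          · subst h
            simp only [Function.update_self]
            have h1 : 0 ≤ ∑ i ∈ s, c i * (d * φ (v i)) :=
              Finset.sum_nonneg fun i hi => mul_nonneg (hc i) (mul_nonneg hdpos.le (hφ i hi))
            have h2 : d * φ b < 0 := mul_neg_of_pos_of_neg hdpos hφb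
            linarith
          · simp [h, hc i]
        · rw [Finset.sum_insert ha]
          simp only [Function.update_self]
          rw [Finset.sum_congr rfl (g := fun i => c i • v i) (fun i hi => by
            rw [Function.update_of_ne (by rintro rfl; exact ha hi)])]
          simp only [hL, smul_add, Finset.sum_add_distrib, smul_smul] at hb
          rw [← Finset.sum_smul] at hb
          rw [sub_smul]
          refine (eq_sub_of_add_eq hb).trans ?_
          abel
      · right
        refine ⟨ψ.comp L, fun i hi => ?_, hψb⟩
        rcases Finset.mem_insert.1 hi with rfl | hi
        · simp [hL, hda]
        · exact hψ i hi

/-- The cone generated by a finite set. -/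
def coneSet {n : ℕ} (F : Finset (Fin n → ℝ)) : Set (Fin n → ℝ) :=
  {x | ∃ c : (Fin n → ℝ) → ℝ, (∀ f, 0 ≤ c f) ∧ x = ∑ f ∈ F, c f • f}

section
variable {n : ℕ} {F : Finset (Fin n → ℝ)}

theorem coneSet_zero : (0 : Fin n → ℝ) ∈ coneSet F := ⟨0, by simp, by simp⟩

theorem coneSet_add {x y : Fin n → ℝ} (hx : x ∈ coneSet F) (hy : y ∈ coneSet F) :
    x + y ∈ coneSet F := by
  obtain ⟨c, hc, rfl⟩ := hx
  obtain ⟨d, hd, rfl⟩ := hy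
  exact ⟨c + d, fun f => add_nonneg (hc f) (hd f), by simp [add_smul, Finset.sum_add_distrib]⟩

theorem coneSet_smul {x : Fin n → ℝ} {t : ℝ} (ht : 0 ≤ t) (hx : x ∈ coneSet F) :
    t • x ∈ coneSet F := by
  obtain ⟨c, hc, rfl⟩ := hx
  exact ⟨t • c, fun f => mul_nonneg ht (hc f), by simp [Finset.smul_sum, smul_smul]⟩

theorem coneSet_mem {f : Fin n → ℝ} (hf : f ∈ F) : f ∈ coneSet F := by
  classical
  refine ⟨Pi.single f 1, fun g => ?_, ?_⟩
  · by_cases h : g = f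
    · subst h; simp
    · simp [h]
  · rw [Finset.sum_eq_single f]
    · simp
    · intro b _ hb; simp [hb]
    · intro h; exact (h hf).elim

theorem coneSet_sum {ι : Type*} (s : Finset ι) (v : ι → Fin n → ℝ)
    (h : ∀ i ∈ s, v i ∈ coneSet F) : ∑ i ∈ s, v i ∈ coneSet F :=
  Finset.sum_induction v (· ∈ coneSet F) (fun _ _ => coneSet_add) coneSet_zero h

theorem closure_subset_coneSet {x : Fin n → ℝ}
    (hx : x ∈ AddSubmonoid.closure (F : Set (Fin n → ℝ))) : x ∈ coneSet F := by
  induction hx using AddSubmonoid.closure_induction with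
  | mem x h => exact coneSet_mem h
  | zero => exact coneSet_zero
  | add x y _ _ hx hy => exact coneSet_add hx hy

theorem cone_eq_coneSet (S : AddSubmonoid (Fin n → ℝ))
    (hF : AddSubmonoid.closure (F : Set (Fin n → ℝ)) = S) :
    {x : Fin n → ℝ | ∃ (k : ℕ) (c : Fin k → ℝ) (v : Fin k → (Fin n → ℝ)),
      (∀ i, 0 ≤ c i) ∧ (∀ i, v i ∈ S) ∧ x = ∑ i, c i • v i} = coneSet F := by
  subst hF
  ext x
  constructor
  · rintro ⟨k, c, v, hc, hv, rfl⟩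
    exact coneSet_sum _ _ fun i _ => coneSet_smul (hc i) (closure_subset_coneSet (hv i))
  · rintro ⟨c, hc, rfl⟩
    refine ⟨F.card, fun i => c (F.equivFin.symm i), fun i => F.equivFin.symm i,
      fun i => hc _, fun i => AddSubmonoid.subset_closure (F.equivFin.symm i).2, ?_⟩
    rw [Equiv.sum_comp F.equivFin.symm (fun f : F => c f • (f : Fin n → ℝ))]
    exact (Finset.sum_coe_sort F (fun f => c f • f)).symm

/-- Every point of the cone lies in the (algebraic) relative interior of an exposed face. -/
theorem exists_face {x : Fin n → ℝ} (hx : x ∈ coneSet F) :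
    ∃ u : Fin n → ℝ, (∀ y ∈ coneSet F, 0 ≤ u ⬝ᵥ y) ∧ u ⬝ᵥ x = 0 ∧
      ∀ y ∈ coneSet F, u ⬝ᵥ y = 0 → ∃ N : ℝ, 0 < N ∧ N • x - y ∈ coneSet F := by
  classical
  let P : (Fin n → ℝ) → Prop := fun y => ∃ N : ℝ, 0 < N ∧ N • x - y ∈ coneSet F
  have key : ∀ f ∈ F, ∃ u : Fin n → ℝ, (∀ y ∈ coneSet F, 0 ≤ u ⬝ᵥ y) ∧ u ⬝ᵥ x = 0 ∧
      (¬ P f → 0 < u ⬝ᵥ f) := by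
    intro f hf
    by_cases hP : P f
    · exact ⟨0, by simp, by simp, fun h => (h hP).elim⟩
    rcases farkas_aux (Finset.insertNone F)
      (fun o : Option (Fin n → ℝ) => o.elim (-x) id) (-f) with ⟨c, hc, hb⟩ | ⟨φ, hφ, hφf⟩
    · exfalso
      apply hP
      rw [Finset.sum_insertNone] at hb
      simp only [Option.elim, id] at hb
      have h2 : c none • x - f = ∑ g ∈ F, c (some g) • g := by
        rw [sub_eq_add_neg, hb]; simp
      refine ⟨c none + 1, by linarith [hc none], ?_⟩
      have : (c none + 1) • x - f = (c none • x - f) + x := by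
        rw [add_smul, one_smul]; abel
      rw [this, h2]
      exact coneSet_add ⟨fun g => c (some g), fun g => hc _, rfl⟩ hx
    · let u := (dotProductEquiv ℝ (Fin n)).symm φ
      have hu : ∀ y, u ⬝ᵥ y = φ y := fun y => by
        have : dotProductEquiv ℝ (Fin n) u = φ := LinearEquiv.apply_symm_apply _ _
        rw [← this]; rfl
      have hnn : ∀ y ∈ coneSet F, 0 ≤ u ⬝ᵥ y := by
        rintro y ⟨c, hc, rfl⟩
        rw [hu, map_sum]
        refine Finset.sum_nonneg fun g hg => ?_
        rw [map_smul]
        exact mul_nonneg (hc g) (hφ (some g) (by simpa using hg))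
      refine ⟨u, hnn, le_antisymm ?_ (hnn x hx), fun _ => ?_⟩
      · have := hφ none (by simp)
        simp at this
        rw [hu]; exact this
      · rw [hu]; simpa using hφf
  choose! u hu1 hu2 hu3 using key
  refine ⟨∑ f ∈ F, u f, fun y hy => ?_, ?_, ?_⟩
  · rw [sum_dotProduct]; exact Finset.sum_nonneg fun f hf => hu1 f hf y hy
  · rw [sum_dotProduct]; exact Finset.sum_eq_zero fun f hf => hu2 f hf
  · rintro y ⟨c, hc, rfl⟩ h0
    have hPadd : ∀ a b, P a → P b → P (a + b) := by
      rintro a b ⟨N, hN, ha⟩ ⟨M, hM, hb⟩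
      refine ⟨N + M, by positivity, ?_⟩
      have : (N + M) • x - (a + b) = (N • x - a) + (M • x - b) := by rw [add_smul]; abel
      rw [this]; exact coneSet_add ha hb
    have hP0 : P 0 := ⟨1, one_pos, by simpa using hx⟩
    refine Finset.sum_induction _ P hPadd hP0 fun f hf => ?_
    by_cases hPf : P f
    · obtain ⟨N, hN, ha⟩ := hPf
      refine ⟨c f * N + 1, by have := hc f; positivity, ?_⟩
      have : (c f * N + 1) • x - c f • f = c f • (N • x - f) + x := by
        rw [add_smul, one_smul, smul_sub, smul_smul]; abel
      rw [this]; exact coneSet_add (coneSet_smul (hc f) ha) hx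
    · have : c f = 0 := by
        rw [dotProduct_sum] at h0
        have hnn : ∀ g ∈ F, 0 ≤ (∑ f ∈ F, u f) ⬝ᵥ c g • g := fun g hg => by
          rw [sum_dotProduct]
          exact Finset.sum_nonneg fun f hf => hu1 f hf _ (coneSet_smul (hc g) (coneSet_mem hg))
        have h1 := (Finset.sum_eq_zero_iff_of_nonneg hnn).1 h0 f hf
        rw [sum_dotProduct] at h1
        have h2 := (Finset.sum_eq_zero_iff_of_nonneg fun g hg =>
          hu1 g hg _ (coneSet_smul (hc f) (coneSet_mem hf))).1 h1 f hf
        rw [dotProduct_smul, smul_eq_mul] at h2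
        rcases mul_eq_zero.1 h2 with h | h
        · exact h
        · exact absurd h (hu3 f hf hPf).ne'
      rw [this, zero_smul]; exact hP0

/-- Algebraic description of the relative interior of a convex cone. -/
theorem mem_relint_iff {τ : Set (Fin n → ℝ)} (h0 : (0 : Fin n → ℝ) ∈ τ)
    (hadd : ∀ x ∈ τ, ∀ y ∈ τ, x + y ∈ τ) (hsmul : ∀ t : ℝ, 0 ≤ t → ∀ x ∈ τ, t • x ∈ τ)
    (x : Fin n → ℝ) :
    x ∈ intrinsicInterior ℝ τ ↔
      x ∈ τ ∧ ∀ y ∈ τ, ∃ N : ℝ, 0 < N ∧ N • x - y ∈ τ := by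
  have hspan : ∀ w, w ∈ affineSpan ℝ τ ↔ w ∈ Submodule.span ℝ τ := by
    intro w
    have := affineSpan_insert_zero (k := ℝ) τ
    rw [Set.insert_eq_of_mem h0] at this
    rw [← SetLike.mem_coe, this, SetLike.mem_coe]
  have hchar : ∀ z, z ∈ intrinsicInterior ℝ τ ↔ z ∈ Submodule.span ℝ τ ∧
      ∃ V : Set (Fin n → ℝ), IsOpen V ∧ z ∈ V ∧ ∀ w ∈ V, w ∈ Submodule.span ℝ τ → w ∈ τ := by
    intro z
    rw [mem_intrinsicInterior]
    constructor
    · rintro ⟨y, hy, rfl⟩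
      refine ⟨(hspan _).1 y.2, ?_⟩
      rw [mem_interior] at hy
      obtain ⟨t, hts, ht, hyt⟩ := hy
      obtain ⟨V, hV, rfl⟩ := isOpen_induced_iff.1 ht
      exact ⟨V, hV, hyt, fun w hw hws => hts (a := ⟨w, (hspan w).2 hws⟩) hw⟩
    · rintro ⟨hz, V, hV, hzV, h⟩
      refine ⟨⟨z, (hspan z).2 hz⟩, ?_, rfl⟩
      rw [mem_interior]
      exact ⟨Subtype.val ⁻¹' V, fun w hw => h w hw ((hspan _).1 w.2),
        hV.preimage continuous_subtype_val, hzV⟩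
  constructor
  · intro hx
    have hxτ := intrinsicInterior_subset hx
    refine ⟨hxτ, fun y hy => ?_⟩
    obtain ⟨hxs, V, hV, hxV, h⟩ := (hchar x).1 hx
    have hcont : Continuous fun t : ℝ => x + t • (x - y) := by fun_prop
    have hev : ∀ᶠ t in nhds (0 : ℝ), x + t • (x - y) ∈ V :=
      hcont.continuousAt.eventually_mem (hV.mem_nhds (by simpa using hxV))
    obtain ⟨ε, hε, hb⟩ := Metric.eventually_nhds_iff.1 hev
    have hm := hb (y := ε / 2) (by simp [abs_of_pos hε]; linarith)
    have hm2 := h _ hm (Submodule.add_mem _ hxs (Submodule.smul_mem _ _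
      (Submodule.sub_mem _ hxs (Submodule.subset_span hy))))
    refine ⟨(ε / 2)⁻¹ + 1, by positivity, ?_⟩
    have := hsmul (ε / 2)⁻¹ (by positivity) _ hm2
    rwa [smul_add, smul_smul, inv_mul_cancel₀ (by positivity), one_smul, ← add_sub_assoc,
      ← one_smul ℝ x, smul_smul, mul_one, ← add_smul] at this
  · rintro ⟨hxτ, hN⟩
    have hconv : Convex ℝ τ := by
      intro a ha b hb s t hs ht _
      exact hadd _ (hsmul s hs a ha) _ (hsmul t ht b hb)
    obtain ⟨y, hy⟩ := Set.Nonempty.intrinsicInterior hconv ⟨0, h0⟩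
    obtain ⟨N, hNpos, hz⟩ := hN y (intrinsicInterior_subset hy)
    obtain ⟨hys, V, hV, hyV, h⟩ := (hchar y).1 hy
    refine (hchar x).2 ⟨Submodule.subset_span hxτ,
      (fun w => N • w - (N • x - y)) ⁻¹' V, hV.preimage (by fun_prop), by simpa using hyV, ?_⟩
    intro w hw hws
    have h1 := h _ hw (Submodule.sub_mem _ (Submodule.smul_mem _ _ hws) (Submodule.subset_span hz))
    have h2 := hsmul N⁻¹ (by positivity) _ (hadd _ h1 _ hz)
    simpa [smul_smul, inv_mul_cancel₀ hNpos.ne'] using h2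

/-- Relative interior of an exposed face of the cone. -/
theorem mem_relint_face {u : Fin n → ℝ} (hu : ∀ y ∈ coneSet F, 0 ≤ u ⬝ᵥ y) (x : Fin n → ℝ) :
    x ∈ intrinsicInterior ℝ {y ∈ coneSet F | u ⬝ᵥ y = 0} ↔
      x ∈ coneSet F ∧ u ⬝ᵥ x = 0 ∧ ∀ y ∈ coneSet F, u ⬝ᵥ y = 0 →
        ∃ N : ℝ, 0 < N ∧ N • x - y ∈ coneSet F := by
  rw [mem_relint_iff (τ := {y ∈ coneSet F | u ⬝ᵥ y = 0}) ⟨coneSet_zero, by simp⟩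
    (fun a ha b hb => ⟨coneSet_add ha.1 hb.1, by rw [dotProduct_add, ha.2, hb.2, add_zero]⟩)
    (fun t ht a ha => ⟨coneSet_smul ht ha.1, by rw [dotProduct_smul, ha.2, smul_zero]⟩)]
  constructor
  · rintro ⟨hx, h⟩
    refine ⟨hx.1, hx.2, fun y hy hy0 => ?_⟩
    obtain ⟨N, hN, hm⟩ := h y ⟨hy, hy0⟩
    exact ⟨N, hN, hm.1⟩
  · rintro ⟨hx, hx0, h⟩
    refine ⟨⟨hx, hx0⟩, fun y hy => ?_⟩
    obtain ⟨N, hN, hm⟩ := h y hy.1 hy.2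
    exact ⟨N, hN, hm, by rw [dotProduct_sub, dotProduct_smul, hx0, hy.2]; simp⟩

theorem face_generators {u : Fin n → ℝ} (hu : ∀ y ∈ coneSet F, 0 ≤ u ⬝ᵥ y) {y : Fin n → ℝ}
    (hy : y ∈ coneSet F) (hy0 : u ⬝ᵥ y = 0) : y ∈ coneSet (F.filter fun f => u ⬝ᵥ f = 0) := by
  classical
  obtain ⟨c, hc, rfl⟩ := hy
  refine ⟨c, hc, ?_⟩
  rw [Finset.sum_filter_of_ne]
  intro f hf hne
  rw [dotProduct_sum] at hy0
  have h1 := (Finset.sum_eq_zero_iff_of_nonneg fun g hg =>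
    hu _ (coneSet_smul (hc g) (coneSet_mem hg))).1 hy0 f hf
  rw [dotProduct_smul, smul_eq_mul] at h1
  rcases mul_eq_zero.1 h1 with h | h
  · exact (hne (by rw [h, zero_smul])).elim
  · exact h

theorem face_monoid_generators {u : Fin n → ℝ} (hu : ∀ y ∈ coneSet F, 0 ≤ u ⬝ᵥ y)
    {y : Fin n → ℝ} (hy : y ∈ AddSubmonoid.closure (F : Set (Fin n → ℝ))) :
    u ⬝ᵥ y = 0 →
    y ∈ AddSubgroup.closure ((F.filter fun f => u ⬝ᵥ f = 0 : Finset (Fin n → ℝ)) :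
      Set (Fin n → ℝ)) := by
  induction hy using AddSubmonoid.closure_induction with
  | mem x h =>
    intro h0
    apply AddSubgroup.subset_closure
    simpa using ⟨h, h0⟩
  | zero => intro _; exact zero_mem _
  | add x y hx hy ihx ihy =>
    intro h0
    rw [dotProduct_add] at h0
    have h1 := hu x (closure_subset_coneSet hx)
    have h2 := hu y (closure_subset_coneSet hy)
    exact add_mem (ihx (by linarith)) (ihy (by linarith))

theorem int_combination {G : Finset (Fin n → ℝ)} {r : Fin n → ℝ}
    (hr : r ∈ AddSubgroup.closure (G : Set (Fin n → ℝ))) :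
    ∃ a : (Fin n → ℝ) → ℤ, r = ∑ f ∈ G, a f • f := by
  classical
  induction hr using AddSubgroup.closure_induction with
  | mem x h =>
    refine ⟨Pi.single x 1, ?_⟩
    rw [Finset.sum_eq_single x]
    · simp
    · intro b _ hb; simp [hb]
    · intro h'; exact (h' h).elim
  | zero => exact ⟨0, by simp⟩
  | add x y _ _ hx hy =>
    obtain ⟨a, rfl⟩ := hx
    obtain ⟨b, rfl⟩ := hy
    exact ⟨a + b, by simp [add_smul, Finset.sum_add_distrib]⟩
  | neg x _ hx =>
    obtain ⟨a, rfl⟩ := hx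
    exact ⟨-a, by simp⟩

/-- All large multiples of a lattice point which is a positive combination of generators lie
in the monoid. -/
theorem large_multiples {G : Finset (Fin n → ℝ)}
    (hnat : ∀ f ∈ G, ∀ i : Fin n, ∃ m : ℕ, f i = (m : ℝ)) {x : Fin n → ℝ}
    (hx : x ∈ AddSubgroup.closure (G : Set (Fin n → ℝ)))
    (c : (Fin n → ℝ) → ℝ) (hc : ∀ f ∈ G, 0 < c f) (hxc : x = ∑ f ∈ G, c f • f) :
    ∀ᶠ k : ℕ in Filter.atTop, k • x ∈ AddSubmonoid.closure (G : Set (Fin n → ℝ)) := by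
  classical
  let R : Set (Fin n → ℝ) := {r | r ∈ AddSubgroup.closure (G : Set (Fin n → ℝ)) ∧
    ∀ j, 0 ≤ r j ∧ r j ≤ ∑ f ∈ G, f j}
  have hint : ∀ r ∈ AddSubgroup.closure (G : Set (Fin n → ℝ)), ∀ j, ∃ m : ℤ, r j = m := by
    intro r hr
    induction hr using AddSubgroup.closure_induction with
    | mem x h =>
      intro j
      obtain ⟨m, hm⟩ := hnat x h j
      exact ⟨m, by simpa using hm⟩
    | zero => intro j; exact ⟨0, by simp⟩
    | add x y _ _ hx hy =>
      intro j
      obtain ⟨a, ha⟩ := hx j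
      obtain ⟨b, hb⟩ := hy j
      exact ⟨a + b, by simp [ha, hb]⟩
    | neg x _ hx =>
      intro j
      obtain ⟨a, ha⟩ := hx j
      exact ⟨-a, by simp [ha]⟩
  have hR : R.Finite := by
    refine Set.Finite.subset (Set.Finite.pi (t := fun j : Fin n =>
      (fun m : ℤ => (m : ℝ)) '' Set.Icc 0 ⌊∑ f ∈ G, f j⌋)
      fun j => (Set.finite_Icc _ _).image _) ?_
    rintro r ⟨hr, hb⟩ j _
    obtain ⟨m, hm⟩ := hint r hr j
    have := hb j
    rw [hm] at this
    exact ⟨m, ⟨by exact_mod_cast this.1, Int.le_floor.2 this.2⟩, hm.symm⟩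
  have hcomb : ∀ r ∈ R, ∃ a : (Fin n → ℝ) → ℤ, r = ∑ f ∈ G, a f • f :=
    fun r hr => int_combination hr.1
  choose! a ha using hcomb
  have hev : ∀ᶠ k : ℕ in Filter.atTop, ∀ r ∈ R, ∀ f ∈ G, (-(a r f)).toNat ≤ ⌊(k : ℝ) * c f⌋₊ := by
    rw [Filter.eventually_all_finite hR]
    intro r _
    rw [Filter.eventually_all_finset]
    intro f hf
    have ht : Filter.Tendsto (fun k : ℕ => ⌊(k : ℝ) * c f⌋₊) Filter.atTop Filter.atTop :=
      tendsto_nat_floor_atTop.comp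
        (Filter.Tendsto.atTop_mul_const (hc f hf) tendsto_natCast_atTop_atTop)
    exact ht.eventually_ge_atTop _
  filter_upwards [hev] with k hk
  set r : Fin n → ℝ := k • x - ∑ f ∈ G, ⌊(k : ℝ) * c f⌋₊ • f with hrdef
  have hr1 : r = ∑ f ∈ G, ((k : ℝ) * c f - ⌊(k : ℝ) * c f⌋₊) • f := by
    rw [hrdef, hxc, Finset.smul_sum, ← Finset.sum_sub_distrib]
    refine Finset.sum_congr rfl fun f _ => ?_
    rw [sub_smul, mul_smul, Nat.cast_smul_eq_nsmul, Nat.cast_smul_eq_nsmul]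
  have hrR : r ∈ R := by
    refine ⟨sub_mem (nsmul_mem hx k) (sum_mem fun f hf =>
      nsmul_mem (AddSubgroup.subset_closure hf) _), fun j => ?_⟩
    rw [hr1, Finset.sum_apply]
    have hf0 : ∀ f ∈ G, 0 ≤ f j := fun f hf => by
      obtain ⟨m, hm⟩ := hnat f hf j
      rw [hm]; positivity
    constructor
    · refine Finset.sum_nonneg fun f hf => mul_nonneg ?_ (hf0 f hf)
      have := Nat.floor_le (a := (k : ℝ) * c f) (mul_nonneg (by positivity) (hc f hf).le)
      linarith
    · refine Finset.sum_le_sum fun f hf => ?_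
      have := Nat.lt_floor_add_one ((k : ℝ) * c f)
      exact mul_le_of_le_one_left (hf0 f hf) (by linarith)
  have hkx : k • x = ∑ f ∈ G, ((⌊(k : ℝ) * c f⌋₊ : ℤ) + a r f).toNat • f := by
    have h1 : k • x = ∑ f ∈ G, ⌊(k : ℝ) * c f⌋₊ • f + r := by rw [hrdef]; abel
    rw [h1]
    conv_lhs => rw [ha r hrR]
    rw [← Finset.sum_add_distrib]
    refine Finset.sum_congr rfl fun f hf => ?_
    have h2 := hk r hrR f hf
    have h3 : (0 : ℤ) ≤ (⌊(k : ℝ) * c f⌋₊ : ℤ) + a r f := by omega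
    rw [← natCast_zsmul _ (Int.toNat _), Int.toNat_of_nonneg h3, add_smul, natCast_zsmul]
  rw [hkx]
  exact sum_mem fun f hf => nsmul_mem (AddSubmonoid.subset_closure hf) _

/-- Descent for semisaturated monoids. -/
theorem semisaturated_descent (U : AddSubmonoid (Fin n → ℝ)) (A : AddSubgroup (Fin n → ℝ))
    (hU : ∀ m ∈ A, 2 • m ∈ U → 3 • m ∈ U → m ∈ U) {x : Fin n → ℝ} (hx : x ∈ A) (K : ℕ)
    (hK : ∀ k ≥ K, k • x ∈ U) : x ∈ U := by
  have : ∀ K : ℕ, (∀ k ≥ K + 1, k • x ∈ U) → x ∈ U := by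
    intro K
    induction K with
    | zero => intro h; simpa using h 1 (by simp)
    | succ K ih =>
      intro h
      apply ih
      intro k hk
      rcases Nat.eq_or_lt_of_le hk with h' | h'
      · apply hU _ (nsmul_mem hx k)
        · rw [smul_smul]; exact h _ (by omega)
        · rw [smul_smul]; exact h _ (by omega)
      · exact h k h'
  exact this K fun k hk => hK k (by omega)
end

/-- Reid–Roberts: the semisaturation of a finitely generated submonoid `S ⊆ ℕ^n` is
`T = ⋃_τ ( ℤ(S ∩ τ) ∩ relint(τ) )`, the union being over the faces `τ` of the cone
`C = ℝ_{≥0}·S`.  Namely: `T` is a submonoid of `ℤS` containing `S`, `T` is semisaturated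
in `ℤS`, and every semisaturated submonoid of `ℤS` containing `S` contains `T`. -/
theorem semisaturation_eq_union_faces (n : ℕ) (S : AddSubmonoid (Fin n → ℝ))
    (hfg : ∃ F : Finset (Fin n → ℝ), AddSubmonoid.closure (F : Set (Fin n → ℝ)) = S)
    (hnat : ∀ x ∈ S, ∀ i : Fin n, ∃ m : ℕ, x i = (m : ℝ))
    (C : Set (Fin n → ℝ))
    (hC : C = {x | ∃ (k : ℕ) (c : Fin k → ℝ) (v : Fin k → (Fin n → ℝ)),
      (∀ i, 0 ≤ c i) ∧ (∀ i, v i ∈ S) ∧ x = ∑ i, c i • v i})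
    (IsFace : Set (Fin n → ℝ) → Prop)
    (hFace : ∀ τ : Set (Fin n → ℝ), IsFace τ ↔
      ∃ u : Fin n → ℝ, (∀ y ∈ C, 0 ≤ u ⬝ᵥ y) ∧ τ = {y ∈ C | u ⬝ᵥ y = 0})
    (T : Set (Fin n → ℝ))
    (hT : T = ⋃ τ ∈ {τ : Set (Fin n → ℝ) | IsFace τ},
      ((AddSubgroup.closure ((S : Set (Fin n → ℝ)) ∩ τ) : AddSubgroup (Fin n → ℝ)) : Set (Fin n → ℝ))
        ∩ intrinsicInterior ℝ τ) :
    -- (i) `T` is a submonoid of `ℤS` containing `S`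
    ((0 : Fin n → ℝ) ∈ T ∧ (∀ x ∈ T, ∀ y ∈ T, x + y ∈ T) ∧
      (S : Set (Fin n → ℝ)) ⊆ T ∧
      T ⊆ (AddSubgroup.closure (S : Set (Fin n → ℝ)) : Set (Fin n → ℝ))) ∧
    -- (ii) `T` is semisaturated in `ℤS`
    (∀ m ∈ AddSubgroup.closure (S : Set (Fin n → ℝ)),
      2 • m ∈ T → 3 • m ∈ T → m ∈ T) ∧
    -- (iii) `T` is contained in every semisaturated submonoid of `ℤS` containing `S`
    (∀ U : AddSubmonoid (Fin n → ℝ),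
      (S : Set (Fin n → ℝ)) ⊆ (U : Set (Fin n → ℝ)) →
      (U : Set (Fin n → ℝ)) ⊆ (AddSubgroup.closure (S : Set (Fin n → ℝ)) : Set (Fin n → ℝ)) →
      (∀ m ∈ AddSubgroup.closure (S : Set (Fin n → ℝ)),
        2 • m ∈ U → 3 • m ∈ U → m ∈ U) →
      T ⊆ (U : Set (Fin n → ℝ))) := by
  obtain ⟨F, hF⟩ := hfg
  have hCF : C = coneSet F := by rw [hC]; exact cone_eq_coneSet S hF
  have hSC : ∀ x ∈ S, x ∈ coneSet F := fun x hx => closure_subset_coneSet (by rw [hF]; exact hx)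
  have hTmem : ∀ x, x ∈ T ↔ ∃ u : Fin n → ℝ, (∀ y ∈ coneSet F, 0 ≤ u ⬝ᵥ y) ∧
      x ∈ AddSubgroup.closure ((S : Set (Fin n → ℝ)) ∩ {y ∈ coneSet F | u ⬝ᵥ y = 0}) ∧
      x ∈ coneSet F ∧ u ⬝ᵥ x = 0 ∧ ∀ y ∈ coneSet F, u ⬝ᵥ y = 0 →
        ∃ N : ℝ, 0 < N ∧ N • x - y ∈ coneSet F := by
    intro x
    rw [hT]
    simp only [Set.mem_iUnion, Set.mem_setOf_eq, hFace, hCF, exists_prop]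
    constructor
    · rintro ⟨τ, ⟨u, hu, rfl⟩, hx1, hx2⟩
      exact ⟨u, hu, hx1, (mem_relint_face hu x).1 hx2⟩
    · rintro ⟨u, hu, hx1, hx2⟩
      exact ⟨_, ⟨u, hu, rfl⟩, hx1, (mem_relint_face hu x).2 hx2⟩
  have hST : (S : Set (Fin n → ℝ)) ⊆ T := by
    intro x hx
    obtain ⟨u, hu, hux, h⟩ := exists_face (hSC x hx)
    exact (hTmem x).2 ⟨u, hu, AddSubgroup.subset_closure ⟨hx, hSC x hx, hux⟩, hSC x hx, hux, h⟩
  have hTZ : T ⊆ (AddSubgroup.closure (S : Set (Fin n → ℝ)) : Set (Fin n → ℝ)) := by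
    intro x hx
    obtain ⟨u, hu, hx1, -⟩ := (hTmem x).1 hx
    exact AddSubgroup.closure_mono Set.inter_subset_left hx1
  -- if `x` is in the relative interior of the face of `u` and `w` vanishes at `x`
  -- then `w` vanishes on the face of `u`
  have hmono : ∀ u w x : Fin n → ℝ, (∀ y ∈ coneSet F, 0 ≤ w ⬝ᵥ y) → w ⬝ᵥ x = 0 →
      (∀ y ∈ coneSet F, u ⬝ᵥ y = 0 → ∃ N : ℝ, 0 < N ∧ N • x - y ∈ coneSet F) →
      AddSubgroup.closure ((S : Set (Fin n → ℝ)) ∩ {y ∈ coneSet F | u ⬝ᵥ y = 0}) ≤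
      AddSubgroup.closure ((S : Set (Fin n → ℝ)) ∩ {y ∈ coneSet F | w ⬝ᵥ y = 0}) := by
    intro u w x hw hwx h
    apply AddSubgroup.closure_mono
    rintro y ⟨hyS, hyC, hy0⟩
    refine ⟨hyS, hyC, ?_⟩
    obtain ⟨N, hN, hm⟩ := h y hyC hy0
    have h1 := hw _ hm
    rw [dotProduct_sub, dotProduct_smul, hwx, smul_zero] at h1
    have h2 := hw y hyC
    linarith
  refine ⟨⟨hST S.zero_mem, ?_, hST, hTZ⟩, ?_, ?_⟩
  · intro x hx y hy
    obtain ⟨u, hu, hx1, hxC, hux, hx2⟩ := (hTmem x).1 hx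
    obtain ⟨v, hv, hy1, hyC, hvy, hy2⟩ := (hTmem y).1 hy
    obtain ⟨w, hw, hwxy, h⟩ := exists_face (coneSet_add hxC hyC)
    have h1 := hw x hxC
    have h2 := hw y hyC
    rw [dotProduct_add] at hwxy
    refine (hTmem _).2 ⟨w, hw, add_mem ?_ ?_, coneSet_add hxC hyC, by rw [dotProduct_add, hwxy], h⟩
    · exact hmono u w x hw (by linarith) hx2 hx1
    · exact hmono v w y hw (by linarith) hy2 hy1
  · intro m _ h2 h3
    obtain ⟨u, hu, hx1, hxC, hux, hx2⟩ := (hTmem _).1 h2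
    obtain ⟨v, hv, hy1, hyC, hvy, hy2⟩ := (hTmem _).1 h3
    have e2 : (2 • m : Fin n → ℝ) = (2 : ℝ) • m := by rw [two_smul, two_smul]
    have hum : u ⬝ᵥ m = 0 := by
      rw [e2, dotProduct_smul, smul_eq_mul] at hux; linarith
    have hmC : m ∈ coneSet F := by
      have := coneSet_smul (t := (2 : ℝ)⁻¹) (by norm_num) hxC
      rw [e2, smul_smul] at this
      simpa using this
    refine (hTmem m).2 ⟨u, hu, ?_, hmC, hum, ?_⟩
    · have h3m := hmono v u (3 • m) hu (by rw [dotProduct_smul, hum, smul_zero]) hy2 hy1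
      have : m = 3 • m - 2 • m := by rw [succ_nsmul]; abel
      rw [this]
      exact sub_mem h3m hx1
    · intro y hyC hy0
      obtain ⟨N, hN, hm⟩ := hx2 y hyC hy0
      refine ⟨N * 2, by positivity, ?_⟩
      rwa [e2, smul_smul] at hm
  · intro U hSU _ hU x hx
    have hxZ := hTZ hx
    obtain ⟨u, hu, hx1, hxC, hux, hx2⟩ := (hTmem x).1 hx
    set G := F.filter fun f => u ⬝ᵥ f = 0 with hG
    have hGF : ∀ f ∈ G, f ∈ F ∧ u ⬝ᵥ f = 0 := fun f hf => by simpa [hG] using hf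
    have hFS : ∀ f ∈ F, f ∈ S := fun f hf => by
      rw [← hF]; exact AddSubmonoid.subset_closure hf
    have hxG : x ∈ AddSubgroup.closure (G : Set (Fin n → ℝ)) := by
      refine (AddSubgroup.closure_le _).2 ?_ hx1
      rintro y ⟨hyS, hyC, hy0⟩
      exact face_monoid_generators hu (by rw [hF]; exact hyS) hy0
    have hsum0 : u ⬝ᵥ (∑ f ∈ G, f) = 0 := by
      rw [dotProduct_sum]; exact Finset.sum_eq_zero fun f hf => (hGF f hf).2
    obtain ⟨N, hN, hm⟩ := hx2 (∑ f ∈ G, f)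
      (coneSet_sum _ _ fun f hf => coneSet_mem (hGF f hf).1) hsum0
    have hm0 : u ⬝ᵥ (N • x - ∑ f ∈ G, f) = 0 := by
      rw [dotProduct_sub, dotProduct_smul, hux, hsum0]; simp
    obtain ⟨d, hd, hde⟩ := face_generators hu hm hm0
    have hxc : x = ∑ f ∈ G, (N⁻¹ * (d f + 1)) • f := by
      have h1 : N • x = ∑ f ∈ G, (d f + 1) • f := by
        rw [sub_eq_iff_eq_add.1 hde, ← Finset.sum_add_distrib]
        exact Finset.sum_congr rfl fun f _ => by rw [add_smul, one_smul]
      have h2 : x = N⁻¹ • (N • x) := by rw [smul_smul, inv_mul_cancel₀ hN.ne', one_smul]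
      rw [h1, Finset.smul_sum] at h2
      rw [h2]
      exact Finset.sum_congr rfl fun f _ => by rw [smul_smul]
    have hlarge := large_multiples (G := G) (fun f hf => hnat f (hFS f (hGF f hf).1)) hxG
      (fun f => N⁻¹ * (d f + 1)) (fun f _ => by have := hd f; positivity) hxc
    obtain ⟨K, hK⟩ := Filter.eventually_atTop.1 hlarge
    refine semisaturated_descent U _ hU hxZ K fun k hk => hSU ?_
    have hGS : AddSubmonoid.closure (G : Set (Fin n → ℝ)) ≤ S :=
      (AddSubmonoid.closure_le).2 fun f hf => hFS f (hGF f hf).1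
    exact hGS (hK k hk)
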